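/- Microgrid output agreement with optimal dispatch. Let q_i > 0 for i ∈ V_c := V_G ∪ V_I, set λ = −(Σ_{i∈V_c} q_i^{-1})^{-1} Σ_{i=1}^N δ_i and ū_i = q_i^{-1}λ for i ∈ V_c. Assume the feasibility condition: there exists η̄ ∈ (−π/2, π/2)^M such that 0 = −B_GΓ sin(η̄) + ū_G + δ_G, 0 = −B_IΓ sin(η̄) + ū_I + δ_I, and 0 = −B_LΓ sin(η̄) + δ_L (where ū_G, ū_I collect the ū_i and δ_G, δ_I, δ_L collect the δ_i of the respective node sets). Let G_c be a connected undirected communication graph on V_c and apply the distributed controller ξ̇_i = Σ_{\{i,j\}∈E_c}(ξ_j − ξ_i) − q_i^{-1}ω_i, u_i = q_i^{-1}ξ_i, for i ∈ V_c. Then there exists an open set of initial conditions around the point (ω = 0, η = η̄, ξ = (λ,…,λ)) such that every closed-loop solution starting in it is defined for all t ≥ 0 and satisfies ω_i(t) → 0 as t → ∞ for every node i (zero frequency deviation), and u_i(t) → ū_i as t → ∞ for every i ∈ V_c (optimal steady-state power distribution). -/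

import Mathlib

open Matrix Filter Topology Set Real

/-!
Write the bus equations in descriptor form: the momentum `M_i ω_i` has derivative the power
imbalance at bus `i`, where `M_i = 0` for inverters and loads. With the momenta as coordinates the
closed loop is an autonomous ODE with a continuous right-hand side, the frequencies being a
continuous function of the state.

The energy consists of the kinetic energy, the Bregman distance of `-cos` between the line angles
and their equilibrium values, and the squared distance of the controller states to equilibrium. Its
derivative is minus a dissipation, quadratic in `ω` and in the disagreement of the controllers.
Since `-cos` is strictly convex on `[-π/2, π/2]`, the energy of a solution starting near the
equilibrium is too small for the line angles to reach a small sphere around `ηbar`, so the solution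
stays in a compact set.

Barbalat's lemma for the energy makes the dissipation vanish in the limit, and compactness turns
this into `ω → 0`. Then the momenta converge, so Barbalat's lemma for the momenta makes the
imbalances vanish too. Summed over the buses, the imbalance determines the common value on which
the controllers agree.
-/

section HalfLine

variable {E : Type*} [NormedAddCommGroup E] [NormedSpace ℝ E] {a : ℝ}

/-- Barbalat's lemma. -/
theorem tendsto_zero_of_hasDerivWithinAt_of_uniformContinuousOn {φ φ' : ℝ → E} {l : E}
    (hφ : ∀ t ∈ Ici a, HasDerivWithinAt φ (φ' t) (Ici a) t)
    (hφ' : UniformContinuousOn φ' (Ici a)) (hl : Tendsto φ atTop (𝓝 l)) :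
    Tendsto φ' atTop (𝓝 0) := by
  rw [NormedAddGroup.tendsto_nhds_zero]
  intro ε hε
  obtain ⟨d, hd, hclose⟩ := Metric.uniformContinuousOn_iff_le.1 hφ' (ε / 2) (half_pos hε)
  have hincr : Tendsto (fun t => φ (t + d) - φ t) atTop (𝓝 0) := by
    simpa using (hl.comp (tendsto_atTop_add_const_right _ d tendsto_id)).sub hl
  filter_upwards [NormedAddGroup.tendsto_nhds_zero.1 hincr (d * (ε / 2)) (by positivity),
    eventually_ge_atTop a] with t hsmall hat
  have hsub : Icc t (t + d) ⊆ Ici a := fun s hs => hat.trans hs.1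
  have hslope : ‖φ (t + d) - (t + d) • φ' t - (φ t - t • φ' t)‖ ≤ ε / 2 * (t + d - t) := by
    refine norm_image_sub_le_of_norm_deriv_le_segment' (f := fun s => φ s - s • φ' t)
      (f' := fun s => φ' s - φ' t) (fun s hs => ?_) (fun s hs => ?_) (t + d)
      (right_mem_Icc.2 (by linarith))
    · simpa using ((hφ s (hsub hs)).mono hsub).fun_sub
        ((hasDerivWithinAt_id s _).smul_const (φ' t))
    · rw [← dist_eq_norm]
      refine hclose s (hsub (Ico_subset_Icc_self hs)) t hat ?_
      rw [Real.dist_eq, abs_of_nonneg (sub_nonneg.2 hs.1)]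
      linarith [hs.2]
  have hscaled : d * ‖φ' t‖ < d * ε := by
    calc d * ‖φ' t‖ = ‖d • φ' t‖ := by rw [norm_smul, Real.norm_of_nonneg hd.le]
      _ = ‖(φ (t + d) - φ t) - (φ (t + d) - (t + d) • φ' t - (φ t - t • φ' t))‖ := by
        congr 1; module
      _ ≤ ‖φ (t + d) - φ t‖ + ‖φ (t + d) - (t + d) • φ' t - (φ t - t • φ' t)‖ := norm_sub_le _ _
      _ < d * (ε / 2) + ε / 2 * (t + d - t) := add_lt_add_of_lt_of_le hsmall hslope
      _ = d * ε := by ring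
  exact lt_of_mul_lt_mul_left hscaled hd.le

theorem uniformContinuousOn_of_hasDerivWithinAt_of_mapsTo {x : ℝ → E} {F : E → E} {K : Set E}
    (hK : IsCompact K) (hxK : MapsTo x (Ici a) K) (hF : Continuous F)
    (hx : ∀ t ∈ Ici a, HasDerivWithinAt x (F (x t)) (Ici a) t) :
    UniformContinuousOn x (Ici a) := by
  obtain ⟨C, hC⟩ := hK.exists_bound_of_continuousOn hF.continuousOn
  have hlip : LipschitzOnWith C.toNNReal x (Ici a) :=
    (convex_Ici a).lipschitzOnWith_of_nnnorm_hasDerivWithin_le hx fun t ht =>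
      NNReal.le_toNNReal_of_coe_le (hC _ (hxK ht))
  exact hlip.uniformContinuousOn

theorem tendsto_comp_zero_of_hasDerivWithinAt_of_mapsTo
    {G : Type*} [NormedAddCommGroup G] [NormedSpace ℝ G]
    {x : ℝ → E} {F : E → E} {K : Set E} {φ : ℝ → G} {g : E → G} {l : G}
    (hK : IsCompact K) (hxK : MapsTo x (Ici a) K) (hF : Continuous F)
    (hx : ∀ t ∈ Ici a, HasDerivWithinAt x (F (x t)) (Ici a) t) (hg : Continuous g)
    (hφ : ∀ t ∈ Ici a, HasDerivWithinAt φ (g (x t)) (Ici a) t) (hl : Tendsto φ atTop (𝓝 l)) :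
    Tendsto (fun t => g (x t)) atTop (𝓝 0) :=
  tendsto_zero_of_hasDerivWithinAt_of_uniformContinuousOn hφ
    ((hK.uniformContinuousOn_of_continuous hg.continuousOn).comp
      (uniformContinuousOn_of_hasDerivWithinAt_of_mapsTo hK hxK hF hx) hxK) hl

theorem antitoneOn_Ici_of_hasDerivWithinAt_nonpos {f f' : ℝ → ℝ}
    (hf : ∀ t ∈ Ici a, HasDerivWithinAt f (f' t) (Ici a) t) (hf' : ∀ t ∈ Ici a, f' t ≤ 0) :
    AntitoneOn f (Ici a) :=
  antitoneOn_of_hasDerivWithinAt_nonpos (convex_Ici a) (fun t ht => (hf t ht).continuousWithinAt)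
    (fun t ht => (hf t (interior_subset ht)).mono interior_subset)
    (fun t ht => hf' t (interior_subset ht))

theorem exists_tendsto_of_antitoneOn_Ici {f : ℝ → ℝ} (hf : AntitoneOn f (Ici a))
    (hbdd : BddBelow (f '' Ici a)) : ∃ l, Tendsto f atTop (𝓝 l) := by
  have hanti : Antitone fun t => f (max t a) := fun s t hst =>
    hf (le_max_right s a) (le_max_right t a) (max_le_max_right a hst)
  have hrange : BddBelow (range fun t => f (max t a)) :=
    hbdd.mono (range_subset_iff.2 fun t => mem_image_of_mem f (le_max_right t a))
  refine ⟨_, (tendsto_atTop_ciInf hanti hrange).congr' ?_⟩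
  filter_upwards [eventually_ge_atTop a] with t ht
  rw [max_eq_left ht]

theorem tendsto_of_tendsto_of_isCompact {α X Y Z : Type*} [TopologicalSpace X]
    [TopologicalSpace Y] [T2Space Y] [TopologicalSpace Z] {f : Filter α} {x : α → X} {K : Set X}
    {p : X → Y} {r : X → Z} {y : Y} {z : Z} (hK : IsCompact K) (hxK : ∀ᶠ t in f, x t ∈ K)
    (hp : Continuous p) (hr : Continuous r) (hpr : ∀ u ∈ K, p u = y → r u = z)
    (hy : Tendsto (fun t => p (x t)) f (𝓝 y)) : Tendsto (fun t => r (x t)) f (𝓝 z) := by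
  rw [tendsto_iff_ultrafilter]
  intro g hg
  obtain ⟨u, huK, hu⟩ := isCompact_iff_ultrafilter_le_nhds.1 hK (g.map x)
    (le_principal_iff.2 (hg hxK))
  have hxu : Tendsto x g (𝓝 u) := hu
  have hpu : p u = y := tendsto_nhds_unique ((hp.tendsto u).comp hxu) (hy.mono_left hg)
  rw [← hpr u huK hpu]
  exact (hr.tendsto u).comp hxu

theorem forall_mem_ball_of_forall_notMem_sphere {X : Type*} [PseudoMetricSpace X] {x : ℝ → X}
    {c : X} {r : ℝ} (hx : ContinuousOn x (Ici a)) (ha : x a ∈ Metric.ball c r)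
    (hsphere : ∀ t ∈ Ici a, x t ∉ Metric.sphere c r) : ∀ t ∈ Ici a, x t ∈ Metric.ball c r := by
  intro t ht
  by_contra! hout
  obtain ⟨s, hs, hsr⟩ := intermediate_value_Icc (f := fun s => dist (x s) c) ht
    (continuous_dist.comp_continuousOn ((hx.mono Icc_subset_Ici_self).prodMk continuousOn_const))
    ⟨(Metric.mem_ball.1 ha).le, not_lt.1 hout⟩
  exact hsphere s hs.1 hsr

/-- When `m = 0` the function `w` itself need not be differentiable. -/
theorem hasDerivWithinAt_half_mul_sq {S : Set ℝ} {w : ℝ → ℝ} {m f t : ℝ}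
    (hS : UniqueDiffWithinAt ℝ S t) (hw : HasDerivWithinAt (fun s => m * w s) f S t) :
    HasDerivWithinAt (fun s => m * w s ^ 2 / 2) (w t * f) S t := by
  rcases eq_or_ne m 0 with rfl | hm
  · have hf : f = 0 := hS.eq_deriv S hw (by simpa using hasDerivWithinAt_const t S (0 : ℝ))
    simpa [hf] using hasDerivWithinAt_const t S (0 : ℝ)
  · have hmomentum : (fun s => m * w s ^ 2 / 2) = fun s => (m * w s) ^ 2 / (2 * m) := by
      ext s
      field_simp
    rw [hmomentum]
    exact ((hw.fun_pow 2).div_const (2 * m)).congr_deriv (by field_simp; norm_num; ring)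

end HalfLine

/-- The Bregman distance of `-cos` from `a` to `x`: the energy, relative to the operating point `a`,
of a line with unit coefficient and angle difference `x`. -/
noncomputable def linePotential (a x : ℝ) : ℝ := cos a - cos x - sin a * (x - a)

@[simp] theorem linePotential_self (a : ℝ) : linePotential a a = 0 := by simp [linePotential]

theorem hasDerivAt_linePotential (a x : ℝ) :
    HasDerivAt (linePotential a) (sin x - sin a) x := by
  have h := ((hasDerivAt_cos x).const_sub (cos a)).sub
    (((hasDerivAt_id x).sub_const a).const_mul (sin a))
  exact h.congr_deriv (by ring)

theorem continuous_linePotential (a : ℝ) : Continuous (linePotential a) :=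
  continuous_iff_continuousAt.2 fun x => (hasDerivAt_linePotential a x).continuousAt

theorem linePotential_pos {a x : ℝ} (ha : a ∈ Icc (-(π / 2)) (π / 2))
    (hx : x ∈ Icc (-(π / 2)) (π / 2)) (hne : x ≠ a) : 0 < linePotential a x := by
  rcases lt_or_gt_of_ne hne with hlt | hlt
  · have h := strictConcaveOn_cos_Icc.lt_slope_of_hasDerivAt hx ha hlt (hasDerivAt_cos a)
    rw [slope_def_field, lt_div_iff₀ (sub_pos.2 hlt)] at h
    unfold linePotential
    linarith
  · have h := strictConcaveOn_cos_Icc.slope_lt_of_hasDerivAt ha hx hlt (hasDerivAt_cos a)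
    rw [slope_def_field, div_lt_iff₀ (sub_pos.2 hlt)] at h
    unfold linePotential
    linarith

section Laplacian

variable {V : Type*} [Fintype V] [DecidableEq V]

theorem neg_lapMatrix_mulVec_apply (G : SimpleGraph V) [DecidableRel G.Adj] (x : V → ℝ)
    (i : V) :
    -(G.lapMatrix ℝ *ᵥ x) i = ∑ j, if G.Adj i j then x j - x i else 0 := by
  rw [SimpleGraph.lapMatrix_mulVec_apply, ← Finset.sum_filter]
  simp [← SimpleGraph.neighborFinset_eq_filter, Finset.sum_sub_distrib]

theorem dotProduct_lapMatrix_mulVec_nonneg (G : SimpleGraph V) [DecidableRel G.Adj] (x : V → ℝ) :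
    0 ≤ x ⬝ᵥ G.lapMatrix ℝ *ᵥ x := by
  simpa using (G.posSemidef_lapMatrix ℝ).dotProduct_mulVec_nonneg x

theorem eq_of_dotProduct_lapMatrix_mulVec_eq_zero {G : SimpleGraph V} [DecidableRel G.Adj]
    (hG : G.Connected) {x : V → ℝ} (hx : x ⬝ᵥ G.lapMatrix ℝ *ᵥ x = 0) (i j : V) : x i = x j := by
  rw [← Matrix.toLinearMap₂'_apply'] at hx
  exact (G.lapMatrix_toLinearMap₂'_apply'_eq_zero_iff_forall_reachable x).1 hx i j
    (hG.preconnected i j)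

end Laplacian

/-- A microgrid with buses `β`, lines `ℓ` and a linear controller with state space `κ → ℝ`. A bus
without dynamics (an inverter or a load) has inertia `0`. The controller injects `input *ᵥ ξ` at the
buses, and its states interact through the matrix `coupling` (a graph Laplacian in the
application). -/
structure Microgrid (β ℓ κ : Type*) where
  incidence : Matrix β ℓ ℝ
  lineCoeff : ℓ → ℝ
  inertia : β → ℝ
  damping : β → ℝ
  injection : β → ℝ
  input : Matrix β κ ℝ
  coupling : Matrix κ κ ℝ

namespace Microgrid

/-- Triples of a bus vector, line angles and controller states; the bus vector is made of either the
frequencies `ω` or the momenta `M ω`. -/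
abbrev State (β ℓ κ : Type*) := (β → ℝ) × (ℓ → ℝ) × (κ → ℝ)

variable {β ℓ κ : Type*}

section Defs

variable [Fintype ℓ] [Fintype κ] (g : Microgrid β ℓ κ)

/-- The net power at each bus, which drives its momentum. -/
noncomputable def imbalance (ω : β → ℝ) (η : ℓ → ℝ) (ξ : κ → ℝ) : β → ℝ :=
  -(g.damping * ω) - g.incidence *ᵥ (fun k => g.lineCoeff k * sin (η k)) + g.input *ᵥ ξ
    + g.injection

/-- `ω = 0`, `ηbar`, `ξbar` is a synchronous steady state of the closed loop. -/
structure IsEquilibrium (ηbar : ℓ → ℝ) (ξbar : κ → ℝ) : Prop where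
  balance : g.imbalance 0 ηbar ξbar = 0
  agreement : g.coupling *ᵥ ξbar = 0

/-- Solutions of the closed loop on `[0, ∞)`. At a bus of inertia `0` the equation `momentum`
says that the imbalance vanishes, and nothing about the regularity of `ω`. -/
structure IsSolution [Fintype β] (ω : ℝ → β → ℝ) (η : ℝ → ℓ → ℝ) (ξ : ℝ → κ → ℝ) : Prop where
  momentum : ∀ t ∈ Ici (0 : ℝ), HasDerivWithinAt (fun s => g.inertia * ω s)
    (g.imbalance (ω t) (η t) (ξ t)) (Ici 0) t
  angle : ∀ t ∈ Ici (0 : ℝ), HasDerivWithinAt η (ω t ᵥ* g.incidence) (Ici 0) t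
  controller : ∀ t ∈ Ici (0 : ℝ),
    HasDerivWithinAt ξ (-(g.coupling *ᵥ ξ t) - ω t ᵥ* g.input) (Ici 0) t

open Classical in
/-- The frequencies as a function of the momenta, line angles and controller states. At a bus of
inertia `0` the frequency is found by solving the algebraic equation `imbalance = 0`. -/
noncomputable def frequency (x : State β ℓ κ) : β → ℝ := fun i =>
  if g.inertia i = 0 then (g.damping i)⁻¹ * g.imbalance 0 x.2.1 x.2.2 i
  else x.1 i / g.inertia i

/-- The closed loop as an autonomous vector field in the coordinates `(M ω, η, ξ)`. -/
noncomputable def vectorField [Fintype β] (x : State β ℓ κ) : State β ℓ κ :=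
  (g.imbalance (g.frequency x) x.2.1 x.2.2, g.frequency x ᵥ* g.incidence,
    -(g.coupling *ᵥ x.2.2) - g.frequency x ᵥ* g.input)

/-- The rate at which the energy decreases, where `ζ = ξ - ξbar`. -/
noncomputable def dissipation [Fintype β] (ω : β → ℝ) (ζ : κ → ℝ) : ℝ :=
  ∑ i, g.damping i * ω i ^ 2 + ζ ⬝ᵥ g.coupling *ᵥ ζ

/-- The energy stored in the lines, relative to the operating point `ηbar`. -/
noncomputable def potential (ηbar η : ℓ → ℝ) : ℝ :=
  ∑ k, g.lineCoeff k * linePotential (ηbar k) (η k)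

/-- The Lyapunov function of the closed loop, in the coordinates `(ω, η, ξ)`. -/
noncomputable def energy [Fintype β] (ηbar : ℓ → ℝ) (ξbar : κ → ℝ) (x : State β ℓ κ) : ℝ :=
  ∑ i, g.inertia i * x.1 i ^ 2 / 2 + g.potential ηbar x.2.1 + ∑ j, (x.2.2 j - ξbar j) ^ 2 / 2

end Defs

section Box

variable [Fintype ℓ] (g : Microgrid β ℓ κ) (ηbar : ℓ → ℝ) (ξbar : κ → ℝ)

/-- A compact set containing the states of energy at most `c` with line angles within `r` of `ηbar`.
Its coordinates are `(M ω, η, ξ)`: the energy does not bound the frequency of a bus of inertia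
`0`. -/
def energyBox (r c : ℝ) : Set (State β ℓ κ) :=
  univ.pi (fun i => Metric.closedBall 0 √(g.inertia i * (2 * c))) ×ˢ
    Metric.closedBall ηbar r ×ˢ univ.pi fun j => Metric.closedBall (ξbar j) √(2 * c)

theorem isCompact_energyBox (r c : ℝ) : IsCompact (g.energyBox ηbar ξbar r c) :=
  (isCompact_univ_pi fun _ => isCompact_closedBall _ _).prod
    ((isCompact_closedBall _ _).prod (isCompact_univ_pi fun _ => isCompact_closedBall _ _))

end Box

section Potential

variable [Fintype ℓ] {g : Microgrid β ℓ κ} {ηbar : ℓ → ℝ}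

theorem continuous_potential : Continuous (g.potential ηbar) :=
  continuous_finsetSum _ fun k _ =>
    continuous_const.mul ((continuous_linePotential _).comp (continuous_apply k))

theorem potential_self : g.potential ηbar ηbar = 0 := by simp [potential]

theorem potential_pos (hΓ : ∀ k, 0 < g.lineCoeff k) {η : ℓ → ℝ}
    (hηbar : ∀ k, ηbar k ∈ Icc (-(π / 2)) (π / 2)) (hη : ∀ k, η k ∈ Icc (-(π / 2)) (π / 2))
    (hne : η ≠ ηbar) : 0 < g.potential ηbar η := by
  have hpos : ∀ k, η k ≠ ηbar k → 0 < g.lineCoeff k * linePotential (ηbar k) (η k) := fun k hk =>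
    mul_pos (hΓ k) (linePotential_pos (hηbar k) (hη k) hk)
  obtain ⟨k, hk⟩ := Function.ne_iff.1 hne
  refine Finset.sum_pos' (fun k _ => ?_) ⟨k, Finset.mem_univ k, hpos k hk⟩
  rcases eq_or_ne (η k) (ηbar k) with heq | hne
  · simp [heq]
  · exact (hpos k hne).le

theorem exists_potential_barrier (hΓ : ∀ k, 0 < g.lineCoeff k)
    (hηbar : ∀ k, ηbar k ∈ Ioo (-(π / 2)) (π / 2)) :
    ∃ r > 0, ∃ c > 0, (∀ η ∈ Metric.closedBall ηbar r, 0 ≤ g.potential ηbar η) ∧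
      ∀ η ∈ Metric.sphere ηbar r, c ≤ g.potential ηbar η := by
  have hbox : univ.pi (fun _ => Ioo (-(π / 2)) (π / 2)) ∈ 𝓝 ηbar :=
    (isOpen_set_pi finite_univ fun _ _ => isOpen_Ioo).mem_nhds fun k _ => hηbar k
  obtain ⟨r, hr, hball⟩ := Metric.nhds_basis_closedBall.mem_iff.1 hbox
  have hpos : ∀ η ∈ Metric.closedBall ηbar r, η ≠ ηbar → 0 < g.potential ηbar η :=
    fun η hη => potential_pos hΓ (fun k => Ioo_subset_Icc_self (hηbar k))
      fun k => Ioo_subset_Icc_self (hball hη k (mem_univ k))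
  obtain ⟨c, hc, hsphere⟩ := (isCompact_sphere ηbar r).exists_forall_le'
    continuous_potential.continuousOn fun η hη =>
      hpos η (Metric.sphere_subset_closedBall hη) (Metric.ne_of_mem_sphere hη hr.ne')
  refine ⟨r, hr, c, hc, fun η hη => ?_, hsphere⟩
  rcases eq_or_ne η ηbar with rfl | hne
  · exact potential_self.ge
  · exact (hpos η hη hne).le

end Potential

section Dissipation

variable [Fintype β] [Fintype κ] {g : Microgrid β ℓ κ}

theorem dissipation_nonneg (hA : ∀ i, 0 ≤ g.damping i) (hL : ∀ ζ, 0 ≤ ζ ⬝ᵥ g.coupling *ᵥ ζ)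
    (w : β → ℝ) (ζ : κ → ℝ) : 0 ≤ g.dissipation w ζ :=
  add_nonneg (Finset.sum_nonneg fun i _ => mul_nonneg (hA i) (sq_nonneg _)) (hL ζ)

theorem eq_zero_of_dissipation_eq_zero (hA : ∀ i, 0 < g.damping i)
    (hL : ∀ ζ, 0 ≤ ζ ⬝ᵥ g.coupling *ᵥ ζ) {w : β → ℝ} {ζ : κ → ℝ}
    (h : g.dissipation w ζ = 0) : w = 0 ∧ ζ ⬝ᵥ g.coupling *ᵥ ζ = 0 := by
  have hterm : ∀ i ∈ Finset.univ, 0 ≤ g.damping i * w i ^ 2 := fun i _ =>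
    mul_nonneg (hA i).le (sq_nonneg _)
  obtain ⟨hw, hζ⟩ := (add_eq_zero_iff_of_nonneg (Finset.sum_nonneg hterm) (hL ζ)).1 h
  refine ⟨funext fun i => ?_, hζ⟩
  simpa [(hA i).ne'] using (Finset.sum_eq_zero_iff_of_nonneg hterm).1 hw i (Finset.mem_univ i)

end Dissipation

section Reduction

variable [Fintype ℓ] [Fintype κ] {g : Microgrid β ℓ κ}

theorem imbalance_eq_sub_damping (ω : β → ℝ) (η : ℓ → ℝ) (ξ : κ → ℝ) :
    g.imbalance ω η ξ = g.imbalance 0 η ξ - g.damping * ω := by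
  simp only [imbalance, mul_zero]
  abel

theorem IsEquilibrium.imbalance_eq {ηbar : ℓ → ℝ} {ξbar : κ → ℝ}
    (heq : g.IsEquilibrium ηbar ξbar) (ω : β → ℝ) (η : ℓ → ℝ) (ξ : κ → ℝ) :
    g.imbalance ω η ξ = -(g.damping * ω)
      - g.incidence *ᵥ (fun k => g.lineCoeff k * (sin (η k) - sin (ηbar k)))
      + g.input *ᵥ (ξ - ξbar) := by
  have hflow : (fun k => g.lineCoeff k * (sin (η k) - sin (ηbar k))) =
      (fun k => g.lineCoeff k * sin (η k)) - fun k => g.lineCoeff k * sin (ηbar k) := by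
    ext k
    exact mul_sub _ _ _
  rw [← sub_zero (g.imbalance ω η ξ), ← heq.balance, hflow, mulVec_sub, mulVec_sub]
  simp only [imbalance, mul_zero]
  abel

variable [Fintype β]

/-- Summing the imbalance over all buses cancels the line flows, so a common shift of the
controller states is visible in the total input. -/
theorem IsEquilibrium.eq_of_imbalance_eq_zero {ηbar : ℓ → ℝ} {ξbar : κ → ℝ}
    (heq : g.IsEquilibrium ηbar ξbar) (hB : 1 ᵥ* g.incidence = 0)
    (hP : 1 ⬝ᵥ g.input *ᵥ 1 ≠ 0) {η : ℓ → ℝ} {ξ : κ → ℝ}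
    (himb : g.imbalance 0 η ξ = 0) (hξ : ∀ i j, (ξ - ξbar) i = (ξ - ξbar) j) : ξ = ξbar := by
  rw [← sub_eq_zero]
  ext j
  have hconst : ξ - ξbar = (ξ - ξbar) j • 1 := by
    ext i
    simpa using hξ i j
  have htotal := congrArg (1 ⬝ᵥ ·) himb
  rw [heq.imbalance_eq, hconst] at htotal
  simpa [dotProduct_add, dotProduct_sub, dotProduct_mulVec 1 g.incidence, hB, mulVec_smul, hP]
    using htotal

end Reduction

section Continuity

variable [Fintype ℓ] [Fintype κ] (g : Microgrid β ℓ κ)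

theorem continuous_imbalance :
    Continuous fun x : State β ℓ κ => g.imbalance x.1 x.2.1 x.2.2 := by
  unfold imbalance
  fun_prop

theorem continuous_frequency : Continuous g.frequency := by
  refine continuous_pi fun i => ?_
  have himb : Continuous fun x : State β ℓ κ => g.imbalance 0 x.2.1 x.2.2 :=
    g.continuous_imbalance.comp (continuous_const.prodMk continuous_snd)
  by_cases hi : g.inertia i = 0
  · simp only [frequency, hi, if_true]
    exact continuous_const.mul ((continuous_apply i).comp himb)
  · simp only [frequency, hi, if_false]
    fun_prop

theorem continuous_imbalance_frequency :
    Continuous fun x : State β ℓ κ => g.imbalance (g.frequency x) x.2.1 x.2.2 :=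
  g.continuous_imbalance.comp (g.continuous_frequency.prodMk continuous_snd)

variable [Fintype β]

theorem continuous_vectorField : Continuous g.vectorField := by
  have hω := g.continuous_frequency
  have himb := g.continuous_imbalance_frequency
  unfold vectorField
  fun_prop

theorem continuous_dissipation_frequency (ξbar : κ → ℝ) :
    Continuous fun x : State β ℓ κ => g.dissipation (g.frequency x) (x.2.2 - ξbar) := by
  have hω := g.continuous_frequency
  unfold dissipation
  fun_prop

theorem continuous_energy (ηbar : ℓ → ℝ) (ξbar : κ → ℝ) : Continuous (g.energy ηbar ξbar) := by
  have hpot : Continuous (g.potential ηbar) := continuous_potential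
  unfold energy
  fun_prop

end Continuity

section Solution

variable [Fintype β] [Fintype ℓ] [Fintype κ] {g : Microgrid β ℓ κ} {ηbar : ℓ → ℝ} {ξbar : κ → ℝ}
  {ω : ℝ → β → ℝ} {η : ℝ → ℓ → ℝ} {ξ : ℝ → κ → ℝ}

theorem IsSolution.imbalance_eq_zero_of_inertia_eq_zero (h : g.IsSolution ω η ξ) {t : ℝ}
    (ht : t ∈ Ici (0 : ℝ)) {i : β} (hi : g.inertia i = 0) :
    g.imbalance (ω t) (η t) (ξ t) i = 0 := by
  have hmom := hasDerivWithinAt_pi.1 (h.momentum t ht) i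
  simp only [Pi.mul_apply, hi, zero_mul] at hmom
  exact (uniqueDiffOn_Ici 0 t ht).eq_deriv _ hmom (hasDerivWithinAt_const t _ 0)

theorem IsSolution.frequency_eq (h : g.IsSolution ω η ξ) (hA : ∀ i, g.damping i ≠ 0) {t : ℝ}
    (ht : t ∈ Ici (0 : ℝ)) : g.frequency (g.inertia * ω t, η t, ξ t) = ω t := by
  ext i
  by_cases hi : g.inertia i = 0
  · have hbal := h.imbalance_eq_zero_of_inertia_eq_zero ht hi
    rw [imbalance_eq_sub_damping, Pi.sub_apply, sub_eq_zero] at hbal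
    simp [frequency, hi, hbal, hA i]
  · simp [frequency, hi]

theorem IsSolution.hasDerivWithinAt_state (h : g.IsSolution ω η ξ) (hA : ∀ i, g.damping i ≠ 0)
    {t : ℝ} (ht : t ∈ Ici (0 : ℝ)) :
    HasDerivWithinAt (fun s => (g.inertia * ω s, η s, ξ s))
      (g.vectorField (g.inertia * ω t, η t, ξ t)) (Ici 0) t := by
  simp only [vectorField, h.frequency_eq hA ht]
  exact (h.momentum t ht).prodMk ((h.angle t ht).prodMk (h.controller t ht))

theorem IsSolution.hasDerivWithinAt_energy (h : g.IsSolution ω η ξ)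
    (heq : g.IsEquilibrium ηbar ξbar) {t : ℝ} (ht : t ∈ Ici (0 : ℝ)) :
    HasDerivWithinAt (fun s => g.energy ηbar ξbar (ω s, η s, ξ s))
      (-g.dissipation (ω t) (ξ t - ξbar)) (Ici 0) t := by
  have hkinetic : HasDerivWithinAt (fun s => ∑ i, g.inertia i * ω s i ^ 2 / 2)
      (ω t ⬝ᵥ g.imbalance (ω t) (η t) (ξ t)) (Ici 0) t :=
    HasDerivWithinAt.fun_sum fun i _ => hasDerivWithinAt_half_mul_sq (uniqueDiffOn_Ici 0 t ht)
      (hasDerivWithinAt_pi.1 (h.momentum t ht) i)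
  have hpotential : HasDerivWithinAt (fun s => g.potential ηbar (η s))
      ((ω t ᵥ* g.incidence) ⬝ᵥ fun k => g.lineCoeff k * (sin (η t k) - sin (ηbar k)))
      (Ici 0) t := by
    refine (HasDerivWithinAt.fun_sum fun k _ =>
      ((hasDerivAt_linePotential (ηbar k) (η t k)).comp_hasDerivWithinAt t
        (hasDerivWithinAt_pi.1 (h.angle t ht) k)).const_mul (g.lineCoeff k)).congr_deriv ?_
    exact Finset.sum_congr rfl fun k _ => by ring
  have hcontroller : HasDerivWithinAt (fun s => ∑ j, (ξ s j - ξbar j) ^ 2 / 2)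
      ((ξ t - ξbar) ⬝ᵥ (-(g.coupling *ᵥ ξ t) - ω t ᵥ* g.input)) (Ici 0) t := by
    refine (HasDerivWithinAt.fun_sum fun j _ =>
      (((hasDerivWithinAt_pi.1 (h.controller t ht) j).sub_const (ξbar j)).fun_pow 2).div_const
        2).congr_deriv ?_
    refine Finset.sum_congr rfl fun j _ => ?_
    simp only [Pi.sub_apply]
    push_cast
    ring
  have hcoupling : g.coupling *ᵥ ξ t = g.coupling *ᵥ (ξ t - ξbar) := by
    rw [mulVec_sub, heq.agreement, sub_zero]
  refine ((hkinetic.add hpotential).add hcontroller).congr_deriv ?_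
  have hdamping : ∑ i, g.damping i * ω t i ^ 2 = ω t ⬝ᵥ (g.damping * ω t) :=
    Finset.sum_congr rfl fun i _ => by
      rw [Pi.mul_apply]
      ring
  rw [heq.imbalance_eq, hcoupling, dissipation, hdamping]
  generalize ξ t - ξbar = ζ
  simp only [dotProduct_add, dotProduct_sub, dotProduct_neg, dotProduct_mulVec (ω t)]
  rw [dotProduct_comm ζ (ω t ᵥ* g.input)]
  ring

theorem IsSolution.antitoneOn_energy (h : g.IsSolution ω η ξ) (heq : g.IsEquilibrium ηbar ξbar)
    (hD : ∀ w ζ, 0 ≤ g.dissipation w ζ) :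
    AntitoneOn (fun s => g.energy ηbar ξbar (ω s, η s, ξ s)) (Ici 0) :=
  antitoneOn_Ici_of_hasDerivWithinAt_nonpos (fun _ ht => h.hasDerivWithinAt_energy heq ht)
    fun _ _ => neg_nonpos.2 (hD _ _)

theorem potential_le_energy (hM : ∀ i, 0 ≤ g.inertia i) (x : State β ℓ κ) :
    g.potential ηbar x.2.1 ≤ g.energy ηbar ξbar x := by
  have hkinetic : 0 ≤ ∑ i, g.inertia i * x.1 i ^ 2 / 2 := Finset.sum_nonneg fun i _ =>
    div_nonneg (mul_nonneg (hM i) (sq_nonneg _)) zero_le_two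
  have hcontroller : 0 ≤ ∑ j, (x.2.2 j - ξbar j) ^ 2 / 2 := Finset.sum_nonneg fun j _ => by
    positivity
  unfold energy
  linarith

theorem mem_energyBox (hM : ∀ i, 0 ≤ g.inertia i) {r c : ℝ}
    {x : State β ℓ κ} (hball : x.2.1 ∈ Metric.closedBall ηbar r)
    (hpot : 0 ≤ g.potential ηbar x.2.1) (hx : g.energy ηbar ξbar x ≤ c) :
    (g.inertia * x.1, x.2) ∈ g.energyBox ηbar ξbar r c := by
  have hkinetic : ∀ i ∈ Finset.univ, 0 ≤ g.inertia i * x.1 i ^ 2 / 2 := fun i _ =>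
    div_nonneg (mul_nonneg (hM i) (sq_nonneg _)) zero_le_two
  have hcontroller : ∀ j ∈ Finset.univ, 0 ≤ (x.2.2 j - ξbar j) ^ 2 / 2 := fun j _ => by
    positivity
  unfold energy at hx
  refine ⟨fun i _ => ?_, hball, fun j _ => ?_⟩
  · have hi : g.inertia i * x.1 i ^ 2 ≤ 2 * c := by
      linarith [Finset.single_le_sum hkinetic (Finset.mem_univ i), Finset.sum_nonneg hcontroller]
    rw [mem_closedBall_zero_iff, Real.norm_eq_abs]
    refine Real.abs_le_sqrt ?_
    calc (g.inertia i * x.1 i) ^ 2 = g.inertia i * (g.inertia i * x.1 i ^ 2) := by ring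
      _ ≤ g.inertia i * (2 * c) := mul_le_mul_of_nonneg_left hi (hM i)
  · rw [Metric.mem_closedBall, Real.dist_eq]
    refine Real.abs_le_sqrt ?_
    linarith [Finset.single_le_sum hcontroller (Finset.mem_univ j), Finset.sum_nonneg hkinetic]

theorem IsSolution.mem_ball (h : g.IsSolution ω η ξ) (hM : ∀ i, 0 ≤ g.inertia i)
    (hV : AntitoneOn (fun s => g.energy ηbar ξbar (ω s, η s, ξ s)) (Ici 0)) {r c : ℝ}
    (hsphere : ∀ y ∈ Metric.sphere ηbar r, c ≤ g.potential ηbar y)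
    (hball : η 0 ∈ Metric.ball ηbar r) (hc : g.energy ηbar ξbar (ω 0, η 0, ξ 0) < c) :
    ∀ t ∈ Ici (0 : ℝ), η t ∈ Metric.ball ηbar r := by
  refine forall_mem_ball_of_forall_notMem_sphere
    (fun t ht => (h.angle t ht).continuousWithinAt) hball fun t ht hmem => ?_
  refine (hsphere _ hmem).not_gt ?_
  calc g.potential ηbar (η t)
    _ ≤ g.energy ηbar ξbar (ω t, η t, ξ t) := potential_le_energy hM (ω t, η t, ξ t)
    _ ≤ g.energy ηbar ξbar (ω 0, η 0, ξ 0) := hV self_mem_Ici ht ht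
    _ < c := hc

theorem IsSolution.tendsto_dissipation (h : g.IsSolution ω η ξ) (hA : ∀ i, g.damping i ≠ 0)
    (hM : ∀ i, 0 ≤ g.inertia i) (heq : g.IsEquilibrium ηbar ξbar)
    (hV : AntitoneOn (fun s => g.energy ηbar ξbar (ω s, η s, ξ s)) (Ici 0))
    (hpot : ∀ t ∈ Ici (0 : ℝ), 0 ≤ g.potential ηbar (η t)) {K : Set (State β ℓ κ)}
    (hK : IsCompact K) (hxK : MapsTo (fun t => (g.inertia * ω t, η t, ξ t)) (Ici 0) K) :
    Tendsto (fun t => g.dissipation (g.frequency (g.inertia * ω t, η t, ξ t)) (ξ t - ξbar))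
      atTop (𝓝 0) := by
  have hbdd : BddBelow ((fun s => g.energy ηbar ξbar (ω s, η s, ξ s)) '' Ici 0) :=
    ⟨0, forall_mem_image.2 fun t ht => (hpot t ht).trans (potential_le_energy hM (ω t, η t, ξ t))⟩
  obtain ⟨l, hl⟩ := exists_tendsto_of_antitoneOn_Ici hV hbdd
  have hlim := tendsto_comp_zero_of_hasDerivWithinAt_of_mapsTo hK hxK g.continuous_vectorField
    (fun t ht => h.hasDerivWithinAt_state hA ht) (g.continuous_dissipation_frequency ξbar).fun_neg
    (fun t ht => by simpa only [h.frequency_eq hA ht] using h.hasDerivWithinAt_energy heq ht) hl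
  simpa using hlim.neg

theorem IsSolution.tendsto_imbalance (h : g.IsSolution ω η ξ) (hA : ∀ i, g.damping i ≠ 0)
    {K : Set (State β ℓ κ)} (hK : IsCompact K)
    (hxK : MapsTo (fun t => (g.inertia * ω t, η t, ξ t)) (Ici 0) K)
    (hω : Tendsto ω atTop (𝓝 0)) :
    Tendsto (fun t => g.imbalance (g.frequency (g.inertia * ω t, η t, ξ t)) (η t) (ξ t))
      atTop (𝓝 0) :=
  tendsto_comp_zero_of_hasDerivWithinAt_of_mapsTo hK hxK g.continuous_vectorField
    (fun t ht => h.hasDerivWithinAt_state hA ht) g.continuous_imbalance_frequency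
    (fun t ht => by simpa only [h.frequency_eq hA ht] using h.momentum t ht)
    (hω.const_mul g.inertia)

theorem IsSolution.tendsto_of_mapsTo (h : g.IsSolution ω η ξ) (hB : 1 ᵥ* g.incidence = 0)
    (hA : ∀ i, 0 < g.damping i) (hP : 1 ⬝ᵥ g.input *ᵥ 1 ≠ 0)
    (hL : ∀ ζ, 0 ≤ ζ ⬝ᵥ g.coupling *ᵥ ζ)
    (hLker : ∀ ζ, ζ ⬝ᵥ g.coupling *ᵥ ζ = 0 → ∀ i j, ζ i = ζ j)
    (heq : g.IsEquilibrium ηbar ξbar) {K : Set (State β ℓ κ)} (hK : IsCompact K)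
    (hxK : MapsTo (fun t => (g.inertia * ω t, η t, ξ t)) (Ici 0) K)
    (hD : Tendsto (fun t => g.dissipation (g.frequency (g.inertia * ω t, η t, ξ t)) (ξ t - ξbar))
      atTop (𝓝 0)) :
    Tendsto ω atTop (𝓝 0) ∧ Tendsto ξ atTop (𝓝 ξbar) := by
  have hA_ne : ∀ i, g.damping i ≠ 0 := fun i => (hA i).ne'
  have hmem : ∀ᶠ t in atTop, (g.inertia * ω t, η t, ξ t) ∈ K :=
    (eventually_ge_atTop 0).mono fun t ht => hxK ht
  have hω : Tendsto ω atTop (𝓝 0) := by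
    refine (tendsto_of_tendsto_of_isCompact hK hmem (g.continuous_dissipation_frequency ξbar)
      g.continuous_frequency (fun x _ hx => ?_) hD).congr' ?_
    · exact (eq_zero_of_dissipation_eq_zero hA hL hx).1
    · exact (eventually_ge_atTop 0).mono fun t ht => h.frequency_eq hA_ne ht
  refine ⟨hω, tendsto_of_tendsto_of_isCompact (r := fun x => x.2.2) (z := ξbar) hK hmem
    ((g.continuous_dissipation_frequency ξbar).prodMk g.continuous_imbalance_frequency)
    (by fun_prop) (fun x _ hx => ?_) (hD.prodMk_nhds (h.tendsto_imbalance hA_ne hK hxK hω))⟩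
  obtain ⟨hD0, hF0⟩ := Prod.mk.inj hx
  obtain ⟨hω0, hζ⟩ := eq_zero_of_dissipation_eq_zero hA hL hD0
  rw [hω0] at hF0
  exact heq.eq_of_imbalance_eq_zero hB hP hF0 (hLker _ hζ)

end Solution

section Partition

variable [DecidableEq β] {VG VI : Finset β}
  {B : Matrix β ℓ ℝ} {Γ : ℓ → ℝ} {M A δ : β → ℝ} {q : {i // i ∈ VG ∪ VI} → ℝ}
  {Gc : SimpleGraph {i // i ∈ VG ∪ VI}} [DecidableRel Gc.Adj]

/-- The microgrid with generators `VG`, inverters `VI` and loads elsewhere, under the controller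
with cost weights `q` and communication graph `Gc`. -/
noncomputable def ofPartition (B : Matrix β ℓ ℝ) (Γ : ℓ → ℝ) (M A δ : β → ℝ)
    (q : {i // i ∈ VG ∪ VI} → ℝ) (Gc : SimpleGraph {i // i ∈ VG ∪ VI}) [DecidableRel Gc.Adj] :
    Microgrid β ℓ {i // i ∈ VG ∪ VI} where
  incidence := B
  lineCoeff := Γ
  inertia i := if i ∈ VG then M i else 0
  damping := A
  injection := δ
  input := of fun i j => if i = j then (q j)⁻¹ else 0
  coupling := Gc.lapMatrix ℝ

theorem ofPartition_inertia_nonneg (hM : ∀ i ∈ VG, 0 ≤ M i) (i : β) :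
    0 ≤ (ofPartition B Γ M A δ q Gc).inertia i := by
  by_cases hi : i ∈ VG
  · simpa [ofPartition, hi] using hM i hi
  · simp [ofPartition, hi]

theorem ofPartition_input_mulVec_of_mem {i : β} (hi : i ∈ VG ∪ VI)
    (ξ : {i // i ∈ VG ∪ VI} → ℝ) :
    ((ofPartition B Γ M A δ q Gc).input *ᵥ ξ) i = (q ⟨i, hi⟩)⁻¹ * ξ ⟨i, hi⟩ := by
  have hne : ∀ j : {i // i ∈ VG ∪ VI}, j ≠ ⟨i, hi⟩ → i ≠ j := fun j hj hij =>
    hj (Subtype.ext hij.symm)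
  refine (Finset.sum_eq_single ⟨i, hi⟩ (fun j _ hj => ?_) (by simp)).trans ?_
  · simp [ofPartition, hne j hj]
  · simp [ofPartition]

theorem ofPartition_input_mulVec_of_notMem {i : β} (hi : i ∉ VG ∪ VI)
    (ξ : {i // i ∈ VG ∪ VI} → ℝ) :
    ((ofPartition B Γ M A δ q Gc).input *ᵥ ξ) i = 0 :=
  Finset.sum_eq_zero fun j _ => by
    simp [ofPartition, (ne_of_mem_of_not_mem j.2 hi).symm]

theorem ofPartition_vecMul_input [Fintype β] (w : β → ℝ) :
    w ᵥ* (ofPartition B Γ M A δ q Gc).input = fun j => (q j)⁻¹ * w j := by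
  ext j
  simp [ofPartition, vecMul, dotProduct, mul_comm]

theorem ofPartition_one_dotProduct_input_mulVec_one [Fintype β] :
    1 ⬝ᵥ (ofPartition B Γ M A δ q Gc).input *ᵥ 1 = ∑ j, (q j)⁻¹ := by
  rw [dotProduct_mulVec, ofPartition_vecMul_input, dotProduct_one]
  simp only [Pi.one_apply, mul_one]

variable [Fintype ℓ]

theorem ofPartition_imbalance (ω : β → ℝ) (η : ℓ → ℝ) (ξ : {i // i ∈ VG ∪ VI} → ℝ) (i : β) :
    (ofPartition B Γ M A δ q Gc).imbalance ω η ξ i =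
      -(A i) * ω i - ∑ k, B i k * (Γ k * sin (η k))
        + ((ofPartition B Γ M A δ q Gc).input *ᵥ ξ) i + δ i := by
  simp only [imbalance, ofPartition, Pi.add_apply, Pi.sub_apply, Pi.neg_apply, Pi.mul_apply,
    neg_mul, mulVec, dotProduct]

theorem ofPartition_imbalance_of_mem {i : β} (hi : i ∈ VG ∪ VI) (ω : β → ℝ) (η : ℓ → ℝ)
    (ξ : {i // i ∈ VG ∪ VI} → ℝ) :
    (ofPartition B Γ M A δ q Gc).imbalance ω η ξ i =
      -(A i) * ω i - ∑ k, B i k * (Γ k * sin (η k)) + (q ⟨i, hi⟩)⁻¹ * ξ ⟨i, hi⟩ + δ i := by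
  rw [ofPartition_imbalance, ofPartition_input_mulVec_of_mem hi]

theorem ofPartition_imbalance_of_notMem {i : β} (hi : i ∉ VG ∪ VI) (ω : β → ℝ) (η : ℓ → ℝ)
    (ξ : {i // i ∈ VG ∪ VI} → ℝ) :
    (ofPartition B Γ M A δ q Gc).imbalance ω η ξ i =
      -(A i) * ω i - ∑ k, B i k * (Γ k * sin (η k)) + δ i := by
  rw [ofPartition_imbalance, ofPartition_input_mulVec_of_notMem hi, add_zero]

variable [Fintype β]

theorem ofPartition_isEquilibrium {VL : Finset β} (hpart : VG ∪ VI ∪ VL = Finset.univ)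
    {ηbar : ℓ → ℝ} {lam : ℝ}
    (hc : ∀ i, ∀ hi : i ∈ VG ∪ VI,
      0 = -(∑ k, B i k * (Γ k * sin (ηbar k))) + (q ⟨i, hi⟩)⁻¹ * lam + δ i)
    (hl : ∀ i ∈ VL, 0 = -(∑ k, B i k * (Γ k * sin (ηbar k))) + δ i) :
    (ofPartition B Γ M A δ q Gc).IsEquilibrium ηbar fun _ => lam where
  balance := by
    ext i
    by_cases hi : i ∈ VG ∪ VI
    · simpa [ofPartition_imbalance_of_mem hi, neg_add_eq_sub] using (hc i hi).symm
    · have hiL : i ∈ VL := (Finset.mem_union.1 (hpart ▸ Finset.mem_univ i)).resolve_left hi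
      simpa [ofPartition_imbalance_of_notMem hi, neg_add_eq_sub] using (hl i hiL).symm
  agreement := by
    ext i
    rw [← neg_inj, Pi.zero_apply, ofPartition, neg_lapMatrix_mulVec_apply]
    simp

theorem ofPartition_isSolution {VL : Finset β} (hpart : VG ∪ VI ∪ VL = Finset.univ)
    (hM : ∀ i ∈ VG, M i ≠ 0) {ω : ℝ → β → ℝ} {η : ℝ → ℓ → ℝ}
    {ξ : ℝ → {i // i ∈ VG ∪ VI} → ℝ}
    (hη : ∀ t ∈ Ici (0 : ℝ), ∀ k,
      HasDerivWithinAt (fun s => η s k) (∑ i, B i k * ω t i) (Ici 0) t)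
    (hG : ∀ t ∈ Ici (0 : ℝ), ∀ i, ∀ hi : i ∈ VG,
      HasDerivWithinAt (fun s => ω s i)
        ((M i)⁻¹ * (-(A i) * ω t i - (∑ k, B i k * (Γ k * sin (η t k)))
          + (q ⟨i, Finset.mem_union_left _ hi⟩)⁻¹ * ξ t ⟨i, Finset.mem_union_left _ hi⟩ + δ i))
        (Ici 0) t)
    (hI : ∀ t ∈ Ici (0 : ℝ), ∀ i, ∀ hi : i ∈ VI,
      0 = -(A i) * ω t i - (∑ k, B i k * (Γ k * sin (η t k)))
        + (q ⟨i, Finset.mem_union_right _ hi⟩)⁻¹ * ξ t ⟨i, Finset.mem_union_right _ hi⟩ + δ i)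
    (hL : ∀ t ∈ Ici (0 : ℝ), ∀ i ∈ VL,
      0 = -(A i) * ω t i - (∑ k, B i k * (Γ k * sin (η t k))) + δ i)
    (hξ : ∀ t ∈ Ici (0 : ℝ), ∀ i : {i // i ∈ VG ∪ VI},
      HasDerivWithinAt (fun s => ξ s i)
        ((∑ j, if Gc.Adj i j then ξ t j - ξ t i else 0) - (q i)⁻¹ * ω t i.1) (Ici 0) t) :
    (ofPartition B Γ M A δ q Gc).IsSolution ω η ξ where
  momentum t ht := by
    refine hasDerivWithinAt_pi.2 fun i => ?_
    by_cases hiG : i ∈ VG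
    · rw [ofPartition_imbalance_of_mem (Finset.mem_union_left _ hiG)]
      simpa [ofPartition, hiG, mul_inv_cancel_left₀ (hM i hiG)] using
        (hG t ht i hiG).const_mul (M i)
    · have hbal : (ofPartition B Γ M A δ q Gc).imbalance (ω t) (η t) (ξ t) i = 0 := by
        by_cases hiI : i ∈ VI
        · rw [ofPartition_imbalance_of_mem (Finset.mem_union_right _ hiI)]
          exact (hI t ht i hiI).symm
        · have hic : i ∉ VG ∪ VI := by simp [hiG, hiI]
          rw [ofPartition_imbalance_of_notMem hic]
          exact (hL t ht i
            ((Finset.mem_union.1 (hpart ▸ Finset.mem_univ i)).resolve_left hic)).symm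
      rw [hbal]
      simpa [ofPartition, hiG] using hasDerivWithinAt_const t (Ici 0) (0 : ℝ)
  angle t ht := hasDerivWithinAt_pi.2 fun k => by
    simpa [ofPartition, vecMul, dotProduct, mul_comm] using hη t ht k
  controller t ht := hasDerivWithinAt_pi.2 fun j => by
    rw [ofPartition_vecMul_input, Pi.sub_apply, Pi.neg_apply, ofPartition,
      neg_lapMatrix_mulVec_apply]
    exact hξ t ht j

end Partition

end Microgrid

theorem microgrid_zero_frequency_optimal_dispatch_general {β ℓ κ : Type*} [Fintype β] [Fintype ℓ]
    [Fintype κ] (g : Microgrid β ℓ κ) (hB : 1 ᵥ* g.incidence = 0) (hΓ : ∀ k, 0 < g.lineCoeff k)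
    (hM : ∀ i, 0 ≤ g.inertia i) (hA : ∀ i, 0 < g.damping i) (hP : 1 ⬝ᵥ g.input *ᵥ 1 ≠ 0)
    (hL : ∀ ζ, 0 ≤ ζ ⬝ᵥ g.coupling *ᵥ ζ)
    (hLker : ∀ ζ, ζ ⬝ᵥ g.coupling *ᵥ ζ = 0 → ∀ i j, ζ i = ζ j)
    {ηbar : ℓ → ℝ} {ξbar : κ → ℝ} (heq : g.IsEquilibrium ηbar ξbar)
    (hηbar : ∀ k, ηbar k ∈ Ioo (-(π / 2)) (π / 2)) :
    ∃ U : Set (Microgrid.State β ℓ κ), IsOpen U ∧ (0, ηbar, ξbar) ∈ U ∧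
      ∀ ω η ξ, g.IsSolution ω η ξ → (ω 0, η 0, ξ 0) ∈ U →
        Tendsto ω atTop (𝓝 0) ∧ Tendsto ξ atTop (𝓝 ξbar) := by
  obtain ⟨r, hr, c, hc, hpot, hsphere⟩ := Microgrid.exists_potential_barrier hΓ hηbar
  refine ⟨{x | x.2.1 ∈ Metric.ball ηbar r ∧ g.energy ηbar ξbar x < c}, ?_, ?_, ?_⟩
  · exact (Metric.isOpen_ball.preimage (by fun_prop)).inter
      (isOpen_lt (g.continuous_energy ηbar ξbar) continuous_const)
  · exact ⟨Metric.mem_ball_self hr, by simpa [Microgrid.energy, Microgrid.potential_self] using hc⟩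
  · rintro ω η ξ h ⟨hball, henergy⟩
    have hV := h.antitoneOn_energy heq (Microgrid.dissipation_nonneg (fun i => (hA i).le) hL)
    have hη : ∀ t ∈ Ici (0 : ℝ), η t ∈ Metric.closedBall ηbar r := fun t ht =>
      Metric.ball_subset_closedBall (h.mem_ball hM hV hsphere hball henergy t ht)
    have hK := g.isCompact_energyBox ηbar ξbar r c
    have hxK : MapsTo (fun t => (g.inertia * ω t, η t, ξ t)) (Ici 0)
        (g.energyBox ηbar ξbar r c) := fun t ht =>
      Microgrid.mem_energyBox (x := (ω t, η t, ξ t)) hM (hη t ht) (hpot _ (hη t ht))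
        ((hV self_mem_Ici ht ht).trans henergy.le)
    exact h.tendsto_of_mapsTo hB hA hP hL hLker heq hK hxK (h.tendsto_dissipation
      (fun i => (hA i).ne') hM heq hV (fun t ht => hpot _ (hη t ht)) hK hxK)

/-- microgrid output agreement with optimal dispatch.  Under the
feasibility condition, the distributed controller
`ξ̇_i = Σ_{{i,j}∈E_c}(ξ_j − ξ_i) − q_i⁻¹ω_i`, `u_i = q_i⁻¹ξ_i` on the
generators and inverters `V_c = V_G ∪ V_I` locally achieves zero frequency
deviation `ω_i(t) → 0` at every bus, and `u_i(t) → ū_i = q_i⁻¹λ`, the optimal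
steady-state power distribution. -/
theorem microgrid_zero_frequency_optimal_dispatch
    {N M : ℕ} (hN : 0 < N) (hM : 0 < M)
    (B : Matrix (Fin N) (Fin M) ℝ)
    (hB1 : ∀ k, ∑ i, B i k = 0)
    (hBker : LinearMap.ker (Matrix.mulVecLin Bᵀ) =
      Submodule.span ℝ {(fun _ => (1 : ℝ) : Fin N → ℝ)})
    -- partition of the buses into generators, inverters and loads:
    (VG VI VL : Finset (Fin N))
    (hpart : VG ∪ VI ∪ VL = Finset.univ)
    (hGI : Disjoint VG VI) (hGL : Disjoint VG VL) (hIL : Disjoint VI VL)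
    -- line coefficients, inertias, damping coefficients, loads:
    (Γ : Fin M → ℝ) (hΓ : ∀ k, 0 < Γ k)
    (Miner : Fin N → ℝ) (hMiner : ∀ i ∈ VG, 0 < Miner i)
    (A : Fin N → ℝ) (hA : ∀ i, 0 < A i)
    (δ : Fin N → ℝ)
    -- cost weights on the controlled buses V_c = V_G ∪ V_I:
    (q : {i // i ∈ VG ∪ VI} → ℝ) (hq : ∀ i, 0 < q i)
    -- the optimal multiplier λ and optimal inputs ū_i = q_i⁻¹ λ:
    (lam : ℝ)
    (hlam : lam = -(∑ i : {i // i ∈ VG ∪ VI}, (q i)⁻¹)⁻¹ * ∑ i, δ i)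
    -- the feasibility condition:
    (ηbar : Fin M → ℝ) (hηbar : ∀ k, ηbar k ∈ Ioo (-(π / 2)) (π / 2))
    (hfeasG : ∀ i, ∀ hi : i ∈ VG,
      0 = -(∑ k, B i k * (Γ k * Real.sin (ηbar k)))
        + (q ⟨i, Finset.mem_union_left _ hi⟩)⁻¹ * lam + δ i)
    (hfeasI : ∀ i, ∀ hi : i ∈ VI,
      0 = -(∑ k, B i k * (Γ k * Real.sin (ηbar k)))
        + (q ⟨i, Finset.mem_union_right _ hi⟩)⁻¹ * lam + δ i)
    (hfeasL : ∀ i ∈ VL,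
      0 = -(∑ k, B i k * (Γ k * Real.sin (ηbar k))) + δ i)
    -- the connected undirected communication graph on V_c:
    (Gc : SimpleGraph {i // i ∈ VG ∪ VI}) [DecidableRel Gc.Adj]
    (hGc : Gc.Connected) :
    ∃ U : Set ((Fin N → ℝ) × (Fin M → ℝ) × ({i // i ∈ VG ∪ VI} → ℝ)),
      IsOpen U ∧ ((fun _ => 0), ηbar, fun _ => lam) ∈ U ∧
      ∀ (ω : ℝ → Fin N → ℝ) (η : ℝ → Fin M → ℝ)
        (ξ : ℝ → {i // i ∈ VG ∪ VI} → ℝ),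
        -- (ω, η, ξ) is a closed-loop solution on [0, ∞):
        ContinuousOn (fun t => (ω t, η t, ξ t)) (Ici 0) →
        (∀ t ∈ Ici (0 : ℝ), ∀ k,
          HasDerivWithinAt (fun s => η s k) (∑ i, B i k * ω t i) (Ici 0) t) →
        -- synchronous generators (with u_i = q_i⁻¹ ξ_i):
        (∀ t ∈ Ici (0 : ℝ), ∀ i, ∀ hi : i ∈ VG,
          HasDerivWithinAt (fun s => ω s i)
            ((Miner i)⁻¹ * (-(A i) * ω t i
              - (∑ k, B i k * (Γ k * Real.sin (η t k)))
              + (q ⟨i, Finset.mem_union_left _ hi⟩)⁻¹ *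
                  ξ t ⟨i, Finset.mem_union_left _ hi⟩ + δ i)) (Ici 0) t) →
        -- droop-controlled inverters:
        (∀ t ∈ Ici (0 : ℝ), ∀ i, ∀ hi : i ∈ VI,
          0 = -(A i) * ω t i - (∑ k, B i k * (Γ k * Real.sin (η t k)))
            + (q ⟨i, Finset.mem_union_right _ hi⟩)⁻¹ *
                ξ t ⟨i, Finset.mem_union_right _ hi⟩ + δ i) →
        -- frequency-dependent loads:
        (∀ t ∈ Ici (0 : ℝ), ∀ i ∈ VL,
          0 = -(A i) * ω t i - (∑ k, B i k * (Γ k * Real.sin (η t k))) + δ i) →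
        -- the distributed controller:
        (∀ t ∈ Ici (0 : ℝ), ∀ i : {i // i ∈ VG ∪ VI},
          HasDerivWithinAt (fun s => ξ s i)
            ((∑ j, if Gc.Adj i j then ξ t j - ξ t i else 0)
              - (q i)⁻¹ * ω t i.1) (Ici 0) t) →
        -- starting in U:
        (ω 0, η 0, ξ 0) ∈ U →
        -- zero frequency deviation and optimal dispatch in the limit:
        (∀ i, Tendsto (fun t => ω t i) atTop (𝓝 0)) ∧
        (∀ i : {i // i ∈ VG ∪ VI},
          Tendsto (fun t => (q i)⁻¹ * ξ t i) atTop (𝓝 ((q i)⁻¹ * lam))) := by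
  have heq : (Microgrid.ofPartition B Γ Miner A δ q Gc).IsEquilibrium ηbar fun _ => lam :=
    Microgrid.ofPartition_isEquilibrium hpart
      (fun i hi => (Finset.mem_union.1 hi).elim (hfeasG i) (hfeasI i)) hfeasL
  have hinput : 0 < ∑ j, (q j)⁻¹ :=
    haveI := hGc.nonempty
    Finset.sum_pos (fun j _ => inv_pos.2 (hq j)) Finset.univ_nonempty
  obtain ⟨U, hU, hmem, hconv⟩ := microgrid_zero_frequency_optimal_dispatch_general
    (Microgrid.ofPartition B Γ Miner A δ q Gc) (funext fun k => by
      simpa [Microgrid.ofPartition, vecMul, dotProduct] using hB1 k) hΓ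
    (Microgrid.ofPartition_inertia_nonneg fun i hi => (hMiner i hi).le) hA
    (Microgrid.ofPartition_one_dotProduct_input_mulVec_one.trans_ne hinput.ne')
    (dotProduct_lapMatrix_mulVec_nonneg Gc)
    (fun ζ => eq_of_dotProduct_lapMatrix_mulVec_eq_zero hGc) heq hηbar
  refine ⟨U, hU, hmem, fun ω η ξ _ hη hG hI hL hξ h0 => ?_⟩
  obtain ⟨hω, hξ⟩ := hconv ω η ξ (Microgrid.ofPartition_isSolution hpart
    (fun i hi => (hMiner i hi).ne') hη hG hI hL hξ) h0
  exact ⟨tendsto_pi_nhds.1 hω, fun i => (tendsto_pi_nhds.1 hξ i).const_mul _⟩
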